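/- arXiv:2110.12699 — 7 statements merged into one kernel-verified Lean document; each statement's English description precedes it below -/
import Mathlib

section
/- TeamLTL is a conservative extension of LTL: for every TeamLTL formula φ, every trace t, and every initial tef τ for the singleton team {t} (index set a one-element set), ({t},τ) ⊨ φ if and only if t ⊩ φ. -/
namespace TTS

abbrev Trace (AP : Type) := ℕ → Set AP

def IsStutTef {ι : Type} (τ : ℕ → ι → ℕ) : Prop :=
  ∀ n i, τ n i ≤ τ (n + 1) i

def IsTef {ι : Type} (τ : ℕ → ι → ℕ) : Prop :=
  IsStutTef τ ∧ (∀ n, τ n ≠ τ (n + 1)) ∧ (∀ n i, τ (n + 1) i ≤ τ n i + 1)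

def Initial {ι : Type} (τ : ℕ → ι → ℕ) : Prop := ∀ i, τ 0 i = 0

def shift {ι : Type} (τ : ℕ → ι → ℕ) (k : ℕ) : ℕ → ι → ℕ := fun n => τ (n + k)

inductive Formula (AP : Type) : Type
  | atom : AP → Formula AP
  | natom : AP → Formula AP
  | and : Formula AP → Formula AP → Formula AP
  | or : Formula AP → Formula AP → Formula AP
  | X : Formula AP → Formula AP
  | U : Formula AP → Formula AP → Formula AP
  | W : Formula AP → Formula AP → Formula AP

def sat {AP : Type} : {ι : Type} → (ι → Trace AP) → (ℕ → ι → ℕ) → Formula AP → Prop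
  | _, T, τ, .atom p => ∀ i, p ∈ T i (τ 0 i)
  | _, T, τ, .natom p => ∀ i, p ∉ T i (τ 0 i)
  | _, T, τ, .and φ ψ => sat T τ φ ∧ sat T τ ψ
  | ι, T, τ, .or φ ψ =>
      ∃ P : ι → Prop,
        sat (fun i : {i // P i} => T i.1) (fun n i => τ n i.1) φ ∧
        sat (fun i : {i // ¬ P i} => T i.1) (fun n i => τ n i.1) ψ
  | _, T, τ, .X φ => sat T (shift τ 1) φ
  | _, T, τ, .U φ ψ =>
      ∃ k, sat T (shift τ k) ψ ∧ ∀ m, m < k → sat T (shift τ m) φ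
  | _, T, τ, .W φ ψ =>
      ∀ k, sat T (shift τ k) φ ∨ ∃ m, m ≤ k ∧ sat T (shift τ m) ψ

def satE {AP ι : Type} (T : ι → Trace AP) (φ : Formula AP) : Prop :=
  ∃ τ : ℕ → ι → ℕ, IsTef τ ∧ Initial τ ∧ sat T τ φ

def satA {AP ι : Type} (T : ι → Trace AP) (φ : Formula AP) : Prop :=
  ∀ τ : ℕ → ι → ℕ, IsTef τ → Initial τ → sat T τ φ

def satS {AP ι : Type} (T : ι → Trace AP) (φ : Formula AP) : Prop :=
  sat T (fun n _ => n) φ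

def tshift {AP : Type} (t : Trace AP) (k : ℕ) : Trace AP := fun n => t (n + k)

def ltlSat {AP : Type} : Trace AP → Formula AP → Prop
  | t, .atom p => p ∈ t 0
  | t, .natom p => p ∉ t 0
  | t, .and φ ψ => ltlSat t φ ∧ ltlSat t ψ
  | t, .or φ ψ => ltlSat t φ ∨ ltlSat t ψ
  | t, .X φ => ltlSat (tshift t 1) φ
  | t, .U φ ψ => ∃ k, ltlSat (tshift t k) ψ ∧ ∀ m, m < k → ltlSat (tshift t m) φ
  | t, .W φ ψ => ∀ k, ltlSat (tshift t k) φ ∨ ∃ m, m ≤ k ∧ ltlSat (tshift t m) ψ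

/-!
On a single index `i`, an evaluation function `τ` amounts to the trace `n ↦ T i (τ n i)`, and
team disjunction collapses to classical disjunction: a singleton can only be split into itself and
the empty team, and the empty team satisfies every formula because negation is confined to literals.
If moreover `τ` is a tef, strict monotonicity and stepwiseness force it to advance by exactly one at
each step, so an initial one is the identity clock and the trace it reads is the given one.
-/

section

variable {AP ι : Type}

theorem sat_of_isEmpty [IsEmpty ι] (T : ι → Trace AP) (τ : ℕ → ι → ℕ) (φ : Formula AP) :
    sat T τ φ := by
  induction φ generalizing ι with
  | atom p => exact isEmptyElim
  | natom p => exact isEmptyElim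
  | and φ ψ ihφ ihψ => exact ⟨ihφ T τ, ihψ T τ⟩
  | or φ ψ ihφ ihψ => exact ⟨fun _ => True, ihφ _ _, ihψ _ _⟩
  | X _ ihφ => exact ihφ T (shift τ 1)
  | U φ ψ ihφ ihψ => exact ⟨0, ihψ T (shift τ 0), fun m _ => ihφ T (shift τ m)⟩
  | W φ ψ ihφ _ => exact fun k => .inl (ihφ T (shift τ k))

theorem conservative_extension_general [Subsingleton ι] (φ : Formula AP) (T : ι → Trace AP)
    (τ : ℕ → ι → ℕ) (i : ι) : sat T τ φ ↔ ltlSat (fun n => T i (τ n i)) φ := by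
  induction φ generalizing ι with
  | atom p => exact ⟨fun h => h i, fun h j => Subsingleton.elim i j ▸ h⟩
  | natom p => exact ⟨fun h => h i, fun h j => Subsingleton.elim i j ▸ h⟩
  | and φ ψ ihφ ihψ => exact and_congr (ihφ T τ i) (ihψ T τ i)
  | or φ ψ ihφ ihψ =>
    constructor
    · rintro ⟨P, hφ, hψ⟩
      by_cases hi : P i
      · exact .inl ((ihφ _ _ ⟨i, hi⟩).1 hφ)
      · exact .inr ((ihψ _ _ ⟨i, hi⟩).1 hψ)
    · rintro (hφ | hψ)
      · have : IsEmpty {_j : ι // ¬True} := ⟨fun j => j.2 trivial⟩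
        exact ⟨fun _ => True, (ihφ _ _ ⟨i, trivial⟩).2 hφ, sat_of_isEmpty _ _ ψ⟩
      · exact ⟨fun _ => False, sat_of_isEmpty _ _ φ, (ihψ _ _ ⟨i, not_false⟩).2 hψ⟩
  | X _ ihφ => exact ihφ T (shift τ 1) i
  | U φ ψ ihφ ihψ =>
    exact exists_congr fun k => and_congr (ihψ T (shift τ k) i)
      (forall₂_congr fun m _ => ihφ T (shift τ m) i)
  | W φ ψ ihφ ihψ =>
    exact forall_congr' fun k => or_congr (ihφ T (shift τ k) i)
      (exists_congr fun m => and_congr_right fun _ => ihψ T (shift τ m) i)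

namespace IsTef

variable [Subsingleton ι] {τ : ℕ → ι → ℕ}

theorem apply_succ (hτ : IsTef τ) (n : ℕ) (i : ι) : τ (n + 1) i = τ n i + 1 := by
  obtain ⟨monotone, strict, stepwise⟩ := hτ
  have ne : τ n i ≠ τ (n + 1) i := fun h =>
    strict n (funext fun j => Subsingleton.elim i j ▸ h)
  exact (stepwise n i).antisymm ((monotone n i).lt_of_ne ne)

theorem apply_eq_add (hτ : IsTef τ) (n : ℕ) (i : ι) : τ n i = τ 0 i + n := by
  induction n with
  | zero => rfl
  | succ n ih => rw [hτ.apply_succ, ih, Nat.add_assoc]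

end IsTef

end

/-- TeamLTL is a conservative extension of LTL: on a singleton team with any
initial tef, team satisfaction coincides with classical LTL satisfaction. -/
theorem conservative_extension (AP : Type) (φ : Formula AP) (t : Trace AP)
    (ι : Type) [Unique ι] (T : ι → Trace AP) (hT : ∀ i, T i = t)
    (τ : ℕ → ι → ℕ) (hτ : IsTef τ) (hinit : Initial τ) :
    sat T τ φ ↔ ltlSat t φ := by
  have clock (n : ℕ) : τ n default = n := by rw [hτ.apply_eq_add, hinit, Nat.zero_add]
  simpa only [hT, clock] using conservative_extension_general φ T τ default

end TTS
end

section
/- Universal temporal team satisfaction is downward closed: for every TeamLTL formula φ, every team T with index set ι, and every subset ι' ⊆ ι, if T ⊨∀ φ then T↾ι' ⊨∀ φ. -/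
namespace TTS

/-!
A tef of the subteam extends to one of the whole team in which the remaining traces stay at
position `0` forever: tefs need not be fair, and strictness is already witnessed inside the subteam.
For a fixed tef, satisfaction passes to subteams because literals are universal statements about the
traces and a split of the team restricts to a split of the subteam.
-/

section

variable {AP ι κ : Type}

theorem sat_comp {φ : Formula AP} {T : ι → Trace AP} {τ : ℕ → ι → ℕ} (f : κ → ι)
    (h : sat T τ φ) : sat (T ∘ f) (fun n => τ n ∘ f) φ := by
  induction φ generalizing ι κ with
  | atom p => exact fun j => h (f j)
  | natom p => exact fun j => h (f j)
  | and φ ψ ihφ ihψ => exact ⟨ihφ f h.1, ihψ f h.2⟩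
  | or φ ψ ihφ ihψ =>
    obtain ⟨P, hφ, hψ⟩ := h
    exact ⟨P ∘ f, ihφ (Subtype.map f fun _ hj => hj) hφ, ihψ (Subtype.map f fun _ hj => hj) hψ⟩
  | X φ ih => exact ih f h
  | U φ ψ ihφ ihψ =>
    obtain ⟨k, hψ, hφ⟩ := h
    exact ⟨k, ihψ f hψ, fun m hm => ihφ f (hφ m hm)⟩
  | W φ ψ ihφ ihψ =>
    exact fun k => (h k).imp (ihφ f) fun ⟨m, hm, hψ⟩ => ⟨m, hm, ihψ f hψ⟩

variable {τ : ℕ → κ → ℕ}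

theorem Initial.extend (h : Initial τ) (f : κ → ι) :
    Initial fun n => Function.extend f (τ n) 0 := by
  intro i
  classical
  simp only [Function.extend_def]
  split_ifs
  · exact h _
  · rfl

theorem IsStutTef.extend (h : IsStutTef τ) (f : κ → ι) :
    IsStutTef fun n => Function.extend f (τ n) 0 := by
  intro n i
  classical
  simp only [Function.extend_def]
  split_ifs
  · exact h n _
  · exact le_rfl

theorem IsTef.extend (h : IsTef τ) {f : κ → ι} (hf : Function.Injective f) :
    IsTef fun n => Function.extend f (τ n) 0 := by
  obtain ⟨hmono, hstrict, hstep⟩ := h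
  refine ⟨hmono.extend f, fun n => (Function.extend_injective hf 0).ne (hstrict n), fun n i => ?_⟩
  classical
  simp only [Function.extend_def]
  split_ifs
  · exact hstep n _
  · exact Nat.zero_le _

theorem satA_comp_of_injective {φ : Formula AP} {T : ι → Trace AP} (h : satA T φ)
    {f : κ → ι} (hf : Function.Injective f) : satA (T ∘ f) φ := by
  intro τ hτ hinit
  have hsat := sat_comp f (h _ (hτ.extend hf) (hinit.extend f))
  simpa only [Function.extend_comp hf] using hsat

end

/-- Universal temporal team satisfaction is downward closed. -/
theorem satA_downward_closed (AP ι : Type) (φ : Formula AP)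
    (T : ι → Trace AP) (s : Set ι) (h : satA T φ) :
    satA (fun i : s => T i.1) φ :=
  satA_comp_of_injective h Subtype.val_injective

end TTS
end

section
/- Reduct lemma: let T be a team with index set ι, let ι' ⊆ ι, let τ' be a stuttering tef for ι, and let τ be the restriction of τ' to ι'. Then for every TeamLTL formula φ, if (T,τ') ⊨ φ then (T↾ι', τ) ⊨ φ. -/
namespace TTS

/-!
The induction goes through once the inclusion of the subteam is replaced by an arbitrary map of
index sets: a split of the team witnessing a disjunction pulls back along the map, and the map
restricts to each part of the split. Temporal operators only choose steps `n`, which the map does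
not touch.
-/

theorem reduct_lemma_general {AP ι κ : Type} (f : κ → ι) {T : ι → Trace AP} {τ : ℕ → ι → ℕ}
    {φ : Formula AP} (h : sat T τ φ) : sat (fun i => T (f i)) (fun n i => τ n (f i)) φ := by
  induction φ generalizing ι κ with
  | atom p => exact fun i => h (f i)
  | natom p => exact fun i => h (f i)
  | and φ ψ ihφ ihψ => exact ⟨ihφ f h.1, ihψ f h.2⟩
  | or φ ψ ihφ ihψ =>
    obtain ⟨P, hφ, hψ⟩ := h
    exact ⟨fun i => P (f i), ihφ (Subtype.map f fun _ => id) hφ,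
      ihψ (Subtype.map f fun _ => id) hψ⟩
  | X φ ih => exact ih f h
  | U φ ψ ihφ ihψ =>
    obtain ⟨k, hψ, hφ⟩ := h
    exact ⟨k, ihψ f hψ, fun m hm => ihφ f (hφ m hm)⟩
  | W φ ψ ihφ ihψ =>
    exact fun k => (h k).imp (ihφ f) fun ⟨m, hm, hψ⟩ => ⟨m, hm, ihψ f hψ⟩

/-- Reduct lemma: satisfaction transfers from a team to any subteam when the
stuttering tef of the subteam is the restriction of the tef of the full team. -/
theorem reduct_lemma (AP ι : Type) (T : ι → Trace AP) (s : Set ι)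
    (τ' : ℕ → ι → ℕ) (hτ' : IsStutTef τ') (φ : Formula AP)
    (h : sat T τ' φ) :
    sat (fun i : s => T i.1) (fun n (i : s) => τ' n i.1) φ := by
  exact reduct_lemma_general Subtype.val h

end TTS
end

section
/- Existential temporal team satisfaction is not downward closed: fix p ∈ AP and let t be the trace with t(0) = t(1) = {p} and t(n) = ∅ for all n ≥ 2. Let T be the team consisting of two copies of t (index set {1,2}, both indices mapped to t) and let S = T↾{1} be the subteam consisting of one copy of t. Then T ⊨∃ XXp, but it is not the case that S ⊨∃ XXp. -/
namespace TTS

/-!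
A single trace cannot stutter, so over a singleton team every initial tef is synchronous and
`XXp` inspects position `2`. With at least two traces, the steps of a tef can be split between two
groups that advance in turn, so that after two steps every trace is only at position `1`.
-/

section

variable {AP ι : Type}

theorem IsTef.eq_synchronous [Subsingleton ι] {τ : ℕ → ι → ℕ} (hτ : IsTef τ)
    (h_init : Initial τ) : τ = fun n _ => n := by
  obtain ⟨h_mono, h_strict, h_step⟩ := hτ
  funext n i
  induction n with
  | zero => exact h_init i
  | succ n ih =>
    have h_advance : τ n i ≠ τ (n + 1) i := fun h_eq =>
      h_strict n (funext fun j => Subsingleton.elim i j ▸ h_eq)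
    have h_lower := h_mono n i
    have h_upper := h_step n i
    omega

theorem satE.satS [Subsingleton ι] {T : ι → Trace AP} {φ : Formula AP} (h : satE T φ) :
    satS T φ := by
  obtain ⟨τ, hτ, h_init, h_sat⟩ := h
  rwa [hτ.eq_synchronous h_init] at h_sat

theorem sat_X_X_atom_iff {T : ι → Trace AP} {τ : ℕ → ι → ℕ} {p : AP} :
    sat T τ (.X (.X (.atom p))) ↔ ∀ i, p ∈ T i (τ 2 i) :=
  Iff.rfl

section Alternating

variable (s : Set ι) [DecidablePred (· ∈ s)]

/-- The schedule in which the traces indexed by `s` and the remaining traces advance in turn,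
starting with `s`. -/
def alternating (n : ℕ) (i : ι) : ℕ :=
  if i ∈ s then (n + 1) / 2 else n / 2

theorem alternating_two_mul (n : ℕ) (i : ι) : alternating s (2 * n) i = n := by
  unfold alternating
  split <;> omega

theorem initial_alternating : Initial (alternating s) :=
  alternating_two_mul s 0

variable {s} in
theorem isTef_alternating (hs : s.Nonempty) (hs' : sᶜ.Nonempty) : IsTef (alternating s) := by
  obtain ⟨a, ha⟩ := hs
  obtain ⟨b, hb⟩ := hs'
  refine ⟨fun n i => ?mono, fun n h_eq => ?strict, fun n i => ?step⟩
  case mono =>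
    unfold alternating
    split <;> omega
  case strict =>
    have h_a : (n + 1) / 2 = (n + 1 + 1) / 2 := by
      simpa only [alternating, if_pos ha] using congrFun h_eq a
    have h_b : n / 2 = (n + 1) / 2 := by
      simpa only [alternating, if_neg hb] using congrFun h_eq b
    omega
  case step =>
    unfold alternating
    split <;> omega

end Alternating

theorem satE_X_X_atom_of_mem [Nontrivial ι] {t : Trace AP} {p : AP} (h : p ∈ t 1) :
    satE (fun _ : ι => t) (.X (.X (.atom p))) := by
  classical
  obtain ⟨a, b, hab⟩ := exists_pair_ne ι
  refine ⟨alternating {a}, isTef_alternating ⟨a, rfl⟩ ⟨b, hab.symm⟩, initial_alternating _, ?_⟩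
  refine sat_X_X_atom_iff.2 fun i => ?_
  have h_time : alternating {a} 2 i = 1 := alternating_two_mul {a} 1 i
  rwa [h_time]

theorem not_satE_X_X_atom_of_notMem [Subsingleton ι] {T : ι → Trace AP} {p : AP} {i : ι}
    (h : p ∉ T i 2) : ¬ satE T (.X (.X (.atom p))) :=
  fun h_sat => h (sat_X_X_atom_iff.1 h_sat.satS i)

theorem satE_not_downward_closed_general [Nontrivial ι] (i : ι) {t : Trace AP} {p : AP}
    (h1 : p ∈ t 1) (h2 : p ∉ t 2) :
    satE (fun _ : ι => t) (.X (.X (.atom p))) ∧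
    ¬ satE (fun _ : ({i} : Set ι) => t) (.X (.X (.atom p))) :=
  ⟨satE_X_X_atom_of_mem h1, not_satE_X_X_atom_of_notMem (i := ⟨i, rfl⟩) h2⟩

end

/-- Existential satisfaction is not downward closed: the doubleton team of two
copies of t = {p}{p}∅^ω satisfies XXp existentially, but its singleton subteam
does not. -/
theorem satE_not_downward_closed (AP : Type) (p : AP) (t : Trace AP)
    (h0 : t 0 = {p}) (h1 : t 1 = {p}) (h2 : ∀ n, 2 ≤ n → t n = ∅) :
    satE (fun _ : Fin 2 => t) (.X (.X (.atom p))) ∧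
    ¬ satE (fun i : ({0} : Set (Fin 2)) => (fun _ : Fin 2 => t) i.1)
        (.X (.X (.atom p))) := by
  exact satE_not_downward_closed_general 0 (by rw [h1]; rfl) (by rw [h2 2 le_rfl]; exact id)

end TTS
end

section
/- Existential and synchronous satisfiability of TeamLTL coincide: for every TeamLTL formula φ, there exists a nonempty team T with T ⊨∃ φ if and only if there exists a nonempty team T' with T' ⊨ₛ φ. -/
namespace TTS

/-! Along a tef `τ` the team `T` is read at step `n` as `T i (τ n i)`. Letting the team with traces
`n ↦ T i (τ n i)` run synchronously produces the same readings, and nothing else is visible to a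
formula: temporal operators only shift the tef, and disjunctions only restrict the index set.
Conversely, over a nonempty index set the synchronous run is itself an initial tef. -/

section

variable {AP ι : Type}

theorem sat_comp_iff (T : ι → Trace AP) (f : ι → ℕ → ℕ) (τ : ℕ → ι → ℕ) (φ : Formula AP) :
    sat (fun i ↦ T i ∘ f i) τ φ ↔ sat T (fun n i ↦ f i (τ n i)) φ := by
  induction φ generalizing ι with
  | atom p => exact Iff.rfl
  | natom p => exact Iff.rfl
  | and φ ψ ihφ ihψ => exact and_congr (ihφ T f τ) (ihψ T f τ)
  | or φ ψ ihφ ihψ =>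
    exact exists_congr fun P ↦
      and_congr (ihφ (ι := {i // P i}) (fun i ↦ T i) (fun i ↦ f i) fun n i ↦ τ n i)
        (ihψ (ι := {i // ¬ P i}) (fun i ↦ T i) (fun i ↦ f i) fun n i ↦ τ n i)
  | X _ ih => exact ih T f (shift τ 1)
  | U φ ψ ihφ ihψ =>
    exact exists_congr fun k ↦
      and_congr (ihψ T f (shift τ k)) (forall₂_congr fun m _ ↦ ihφ T f (shift τ m))
  | W φ ψ ihφ ihψ =>
    exact forall_congr' fun k ↦
      or_congr (ihφ T f (shift τ k))
        (exists_congr fun m ↦ and_congr_right' (ihψ T f (shift τ m)))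

theorem satS_reparam_iff (T : ι → Trace AP) (τ : ℕ → ι → ℕ) (φ : Formula AP) :
    satS (fun i n ↦ T i (τ n i)) φ ↔ sat T τ φ :=
  sat_comp_iff T (fun i n ↦ τ n i) (fun n _ ↦ n) φ

theorem isTef_synchronous [Nonempty ι] : IsTef fun n (_ : ι) ↦ n :=
  ⟨fun n _ ↦ n.le_succ, fun n h ↦ n.succ_ne_self (congrFun h (Classical.arbitrary ι)).symm,
    fun _ _ ↦ le_rfl⟩

theorem satE_of_satS [Nonempty ι] {T : ι → Trace AP} {φ : Formula AP} (h : satS T φ) :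
    satE T φ :=
  ⟨fun n _ ↦ n, isTef_synchronous, fun _ ↦ rfl, h⟩

theorem satE_satS_equisatisfiable_general [Nonempty ι] (φ : Formula AP) :
    (∃ T : ι → Trace AP, satE T φ) ↔ ∃ T : ι → Trace AP, satS T φ := by
  constructor
  · rintro ⟨T, τ, -, -, h⟩
    exact ⟨fun i n ↦ T i (τ n i), (satS_reparam_iff T τ φ).2 h⟩
  · rintro ⟨T, h⟩
    exact ⟨T, satE_of_satS h⟩

end

/-- Existential and synchronous satisfiability of TeamLTL coincide. -/
theorem satE_satS_equisatisfiable (AP : Type) (φ : Formula AP) :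
    (∃ (ι : Type) (T : ι → Trace AP), Nonempty ι ∧ satE T φ) ↔
    (∃ (ι : Type) (T : ι → Trace AP), Nonempty ι ∧ satS T φ) := by
  simp only [exists_and_left]
  exact exists_congr fun ι ↦ and_congr_right fun _ ↦ satE_satS_equisatisfiable_general φ

end TTS
end

section
/- Stretching lemma: let T = (t_i)_{i∈ι} be a team and τ an initial tef for ι. Define the team T_τ = (t'_i)_{i∈ι} by t'_i(n) := t_i(τ(n)(i)). Then for every TeamLTL formula φ, (T,τ) ⊨ φ if and only if T_τ ⊨ₛ φ. -/
namespace TTS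

/-!
A formula inspects `(T, τ)` only through the sets `T i (τ n i)`, that is, through the stretched
team `T_τ`, and shifting `τ` or splitting `T` shifts or splits `T_τ` accordingly. Hence two pairs
with the same stretched team satisfy the same formulas. Since stretching along the synchronous
tef `σ` changes nothing, `(T, τ)` and `(T_τ, σ)` are two such pairs.
-/

section Stretching

variable {AP ι : Type}

/-- The stretched team `T_τ`, whose `i`-th trace is `T i` read along `τ`. Here `τ` is an arbitrary
function, since a shift of an initial tef may fail to be initial and its restriction to a subteam
may fail to be strictly monotone. -/
def stretch (T : ι → Trace AP) (τ : ℕ → ι → ℕ) : ι → Trace AP :=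
  fun i n => T i (τ n i)

theorem stretch_synchronous (T : ι → Trace AP) : stretch T (fun n _ => n) = T :=
  rfl

theorem stretch_shift (T : ι → Trace AP) (τ : ℕ → ι → ℕ) (k : ℕ) :
    stretch T (shift τ k) = fun i => tshift (stretch T τ i) k :=
  rfl

theorem stretch_restrict (T : ι → Trace AP) (τ : ℕ → ι → ℕ) (P : ι → Prop) :
    stretch (fun i : {i // P i} => T i.1) (fun n i => τ n i.1) = fun i => stretch T τ i.1 :=
  rfl

theorem stretch_shift_congr {T T' : ι → Trace AP} {τ τ' : ℕ → ι → ℕ}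
    (h : stretch T τ = stretch T' τ') (k : ℕ) :
    stretch T (shift τ k) = stretch T' (shift τ' k) := by
  rw [stretch_shift, h, stretch_shift]

theorem stretch_restrict_congr {T T' : ι → Trace AP} {τ τ' : ℕ → ι → ℕ}
    (h : stretch T τ = stretch T' τ') (P : ι → Prop) :
    stretch (fun i : {i // P i} => T i.1) (fun n i => τ n i.1) =
      stretch (fun i : {i // P i} => T' i.1) (fun n i => τ' n i.1) := by
  rw [stretch_restrict, h, stretch_restrict]

theorem sat_iff_of_stretch_eq {T T' : ι → Trace AP} {τ τ' : ℕ → ι → ℕ}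
    (h : stretch T τ = stretch T' τ') (φ : Formula AP) : sat T τ φ ↔ sat T' τ' φ := by
  induction φ generalizing ι with
  | atom p => exact forall_congr' fun i => iff_of_eq (congrArg (p ∈ ·) (congrFun₂ h i 0))
  | natom p => exact forall_congr' fun i => iff_of_eq (congrArg (p ∉ ·) (congrFun₂ h i 0))
  | and φ ψ ihφ ihψ => exact and_congr (ihφ h) (ihψ h)
  | or φ ψ ihφ ihψ =>
    exact exists_congr fun P =>
      and_congr (ihφ (stretch_restrict_congr h P)) (ihψ (stretch_restrict_congr h _))
  | X _ ih => exact ih (stretch_shift_congr h 1)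
  | U φ ψ ihφ ihψ =>
    exact exists_congr fun k =>
      and_congr (ihψ (stretch_shift_congr h k))
        (forall₂_congr fun m _ => ihφ (stretch_shift_congr h m))
  | W φ ψ ihφ ihψ =>
    exact forall_congr' fun k =>
      or_congr (ihφ (stretch_shift_congr h k))
        (exists_congr fun m => and_congr_right fun _ => ihψ (stretch_shift_congr h m))

theorem stretching_lemma_general (T : ι → Trace AP) (τ : ℕ → ι → ℕ) (φ : Formula AP) :
    sat T τ φ ↔ satS (stretch T τ) φ :=
  sat_iff_of_stretch_eq (stretch_synchronous (stretch T τ)).symm φ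

end Stretching

/-- Stretching lemma: satisfaction under an initial tef τ coincides with
synchronous satisfaction of the stretched team T_τ. -/
theorem stretching_lemma (AP ι : Type) (T : ι → Trace AP)
    (τ : ℕ → ι → ℕ) (hτ : IsTef τ) (hinit : Initial τ) (φ : Formula AP) :
    sat T τ φ ↔ satS (fun i n => T i (τ n i)) φ :=
  stretching_lemma_general T τ φ

end TTS
end

section
/- Embedding of synchronous TeamLTL into ∃TeamLTL: let φ'_synch := o ∧ G((o ∧ X¬o) ∨ (¬o ∧ Xo)). For every TeamLTL formula φ over AP and every nonempty team T over AP: T ⊨ₛ φ if and only if T_o ⊨∃ (φ ∧ φ'_synch). -/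
namespace TTS

/-- Mapping a formula along a renaming of atomic propositions. -/
def Formula.map {AP AP' : Type} (f : AP → AP') : Formula AP → Formula AP'
  | .atom p => .atom (f p)
  | .natom p => .natom (f p)
  | .and φ ψ => .and (φ.map f) (ψ.map f)
  | .or φ ψ => .or (φ.map f) (ψ.map f)
  | .X φ => .X (φ.map f)
  | .U φ ψ => .U (φ.map f) (ψ.map f)
  | .W φ ψ => .W (φ.map f) (ψ.map f)

/-- The team T_o over AP ∪ {o}: the fresh proposition o (here: none) is added
at exactly the even positions of every trace. -/
def addO {AP ι : Type} (T : ι → Trace AP) : ι → Trace (Option AP) :=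
  fun i n => {x | (∃ p, x = some p ∧ p ∈ T i n) ∨ (x = none ∧ Even n)}

/-- Gφ := φ W ⊥, with ⊥ := o ∧ ¬o for the fresh proposition o. -/
def G' {AP : Type} (φ : Formula (Option AP)) : Formula (Option AP) :=
  .W φ (.and (.atom none) (.natom none))

/-- φ'_synch := o ∧ G((o ∧ X¬o) ∨ (¬o ∧ Xo)). -/
def phiSynch' (AP : Type) : Formula (Option AP) :=
  .and (.atom none)
    (G' (.or (.and (.atom none) (.X (.natom none)))
             (.and (.natom none) (.X (.atom none)))))

/-! Along `φ'_synch` the proposition `o` alternates, starting true, so on `T_o` every position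
`τ n i` has the parity of `n`. A tef moves each trace by zero or one position at a time, and the
parity rules out zero: hence `τ` is the synchronous tef. Since `o` does not occur in `φ`, the
formula `φ` cannot tell `T_o` from `T`. -/

theorem exists_forall_subtype_and_forall_subtype_not_iff {α : Type*} {A B : α → Prop} :
    (∃ P : α → Prop, (∀ a : {a // P a}, A a) ∧ ∀ a : {a // ¬ P a}, B a) ↔ ∀ a, A a ∨ B a := by
  constructor
  · rintro ⟨P, hA, hB⟩ a
    by_cases ha : P a
    · exact .inl (hA ⟨a, ha⟩)
    · exact .inr (hB ⟨a, ha⟩)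
  · exact fun h => ⟨A, Subtype.property, fun a => (h a).resolve_left a.2⟩

theorem forall_iff_even_iff {Q : ℕ → Prop} :
    (∀ n, (Q n ↔ Even n)) ↔ Q 0 ∧ ∀ n, (Q n ↔ ¬ Q (n + 1)) := by
  constructor
  · intro h
    simp only [h, Nat.even_add_one, not_not, Even.zero, implies_true, and_self]
  · rintro ⟨h_zero, h_alt⟩ n
    induction n with
    | zero => simp only [h_zero, Even.zero]
    | succ n ih => rw [Nat.even_add_one, ← ih, h_alt n, not_not]

section Tef

variable {ι : Type}

/-- The synchronous initial tef `σ`, the one underlying `satS`. -/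
def sync (ι : Type) : ℕ → ι → ℕ := fun n _ => n

theorem isTef_sync [Nonempty ι] : IsTef (sync ι) :=
  ⟨fun n _ => n.le_succ,
    fun n h => n.succ_ne_self (congrFun h (Classical.arbitrary ι)).symm,
    fun _ _ => le_rfl⟩

theorem initial_sync : Initial (sync ι) := fun _ => rfl

theorem eq_sync_of_even_iff {τ : ℕ → ι → ℕ} (h_stut : IsStutTef τ)
    (h_step : ∀ n i, τ (n + 1) i ≤ τ n i + 1) (h_init : Initial τ)
    (h_even : ∀ n i, (Even (τ n i) ↔ Even n)) : τ = sync ι := by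
  funext n i
  induction n with
  | zero => exact h_init i
  | succ n ih =>
    change τ n i = n at ih
    have h_moves : τ (n + 1) i ≠ n := fun h => by
      have h_parity := h_even (n + 1) i
      rw [h, Nat.even_add_one] at h_parity
      exact iff_not_self h_parity
    have h_lower : n ≤ τ (n + 1) i := ih.symm.le.trans (h_stut n i)
    have h_upper : τ (n + 1) i ≤ n + 1 := (h_step n i).trans_eq (congrArg (· + 1) ih)
    exact h_upper.antisymm (h_lower.lt_of_ne' h_moves)

end Tef

section Semantics

variable {AP AP' ι : Type}

theorem sat_map (f : AP → AP') (T : ι → Trace AP') (τ : ℕ → ι → ℕ) (φ : Formula AP) :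
    sat T τ (φ.map f) ↔ sat (fun i n => f ⁻¹' T i n) τ φ := by
  induction φ generalizing ι with
  | atom | natom => exact Iff.rfl
  | and _ _ ihφ ihψ => exact and_congr (ihφ T τ) (ihψ T τ)
  | or _ _ ihφ ihψ => exact exists_congr fun _ => and_congr (ihφ _ _) (ihψ _ _)
  | X _ ih => exact ih T (shift τ 1)
  | U _ _ ihφ ihψ => simp only [Formula.map, sat, ihφ, ihψ]
  | W _ _ ihφ ihψ => simp only [Formula.map, sat, ihφ, ihψ]

theorem sat_G' [Nonempty ι] (T : ι → Trace (Option AP)) (τ : ℕ → ι → ℕ)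
    (φ : Formula (Option AP)) : sat T τ (G' φ) ↔ ∀ k, sat T (shift τ k) φ := by
  have h_bot (m : ℕ) : ¬ sat T (shift τ m) (.and (.atom none) (.natom none)) :=
    fun ⟨h_mem, h_notMem⟩ => h_notMem (Classical.arbitrary ι) (h_mem _)
  exact forall_congr' fun _ => or_iff_left fun ⟨m, _, h⟩ => h_bot m h

/-- The formula `(p ∧ X¬p) ∨ (¬p ∧ Xp)`: every trace changes the truth value of `p` in the
next step. For `p = o` this is the formula under `G` in `φ'_synch`. -/
def Formula.toggle (p : AP) : Formula AP :=
  .or (.and (.atom p) (.X (.natom p))) (.and (.natom p) (.X (.atom p)))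

theorem sat_toggle (T : ι → Trace AP) (τ : ℕ → ι → ℕ) (p : AP) :
    sat T τ (.toggle p) ↔ ∀ i, (p ∈ T i (τ 0 i) ↔ p ∉ T i (τ 1 i)) := by
  simp only [Formula.toggle, sat, shift, ← forall_and, zero_add]
  rw [exists_forall_subtype_and_forall_subtype_not_iff
    (A := fun i => p ∈ T i (τ 0 i) ∧ p ∉ T i (τ 1 i))
    (B := fun i => p ∉ T i (τ 0 i) ∧ p ∈ T i (τ 1 i))]
  simp only [iff_iff_and_or_not_and_not, not_not]

theorem sat_phiSynch' [Nonempty ι] (T : ι → Trace (Option AP)) (τ : ℕ → ι → ℕ) :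
    sat T τ (phiSynch' AP) ↔ ∀ n i, (none ∈ T i (τ n i) ↔ Even n) :=
  calc sat T τ (phiSynch' AP)
    _ ↔ sat T τ (.atom none) ∧ sat T τ (G' (.toggle none)) := Iff.rfl
    _ ↔ ∀ i, none ∈ T i (τ 0 i) ∧ ∀ n, (none ∈ T i (τ n i) ↔ none ∉ T i (τ (n + 1) i)) := by
      simp only [sat_G', sat_toggle, shift, zero_add, add_comm 1, sat, forall_and]
      rw [forall_comm (α := ℕ)]
    _ ↔ ∀ n i, (none ∈ T i (τ n i) ↔ Even n) := by
      rw [forall_comm (α := ℕ)]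
      exact forall_congr' fun i => (forall_iff_even_iff (Q := fun n => none ∈ T i (τ n i))).symm

theorem preimage_some_addO (T : ι → Trace AP) (i : ι) (n : ℕ) : some ⁻¹' addO T i n = T i n := by
  ext p
  simp [addO]

theorem none_mem_addO (T : ι → Trace AP) (i : ι) (n : ℕ) : none ∈ addO T i n ↔ Even n := by
  simp [addO]

theorem sat_addO_map_some (T : ι → Trace AP) (τ : ℕ → ι → ℕ) (φ : Formula AP) :
    sat (addO T) τ (φ.map some) ↔ sat T τ φ := by
  simp only [sat_map, preimage_some_addO]

theorem sat_addO_phiSynch' [Nonempty ι] (T : ι → Trace AP) (τ : ℕ → ι → ℕ) :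
    sat (addO T) τ (phiSynch' AP) ↔ ∀ n i, (Even (τ n i) ↔ Even n) := by
  simp only [sat_phiSynch', none_mem_addO]

end Semantics

/-- Embedding of synchronous TeamLTL into ∃TeamLTL via φ'_synch. -/
theorem embed_sync_into_existsTeamLTL (AP ι : Type) (hne : Nonempty ι)
    (T : ι → Trace AP) (φ : Formula AP) :
    satS T φ ↔ satE (addO T) (.and (φ.map some) (phiSynch' AP)) := by
  constructor
  · intro h
    exact ⟨sync ι, isTef_sync, initial_sync, (sat_addO_map_some T _ φ).2 h,
      (sat_addO_phiSynch' T _).2 fun _ _ => Iff.rfl⟩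
  · rintro ⟨τ, ⟨h_stut, -, h_step⟩, h_init, hφ, h_synch⟩
    have h_sync : τ = sync ι :=
      eq_sync_of_even_iff h_stut h_step h_init ((sat_addO_phiSynch' T τ).1 h_synch)
    subst h_sync
    exact (sat_addO_map_some T _ φ).1 hφ

end TTS
end
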